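/- The numbers 897783067 and 897849649 are both prime, both are congruent to 127 modulo 486, and 897783067^(1/282866) < 897849649^(1/282867) (equivalently, 897783067^282867 < 897849649^282866). -/

import Mathlib

/-!
Lucas's test certifies both primes, with primitive roots `2` and `26`. For the inequality,
`log y - log x ≥ 1 - x / y` shows that `x ^ (n + 1) < y ^ n` as soon as `log x < n * (1 - x / y)`:
the gap `y - x` has to exceed roughly `x * log x / n`. For `x = 897783067`, `y = 897849649` and
`n = 282866` one has `log x < 30 * log 2 < 20.80` and `n * (1 - x / y) > 20.97`.
-/

theorem prime_of_lucas_of_prod_eq {p : ℕ} (a : ZMod p) {l : List ℕ} (hprod : l.prod = p - 1)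
    (hl : ∀ q ∈ l, q.Prime) (ha : a ^ (p - 1) = 1) (hd : ∀ q ∈ l, a ^ ((p - 1) / q) ≠ 1) :
    p.Prime :=
  lucas_primality p a ha fun q hq hqp ↦
    hd q (mem_list_primes_of_dvd_prod hq.prime (fun r hr ↦ (hl r hr).prime) (hprod ▸ hqp))

theorem prime_897783067 : Nat.Prime 897783067 := by
  refine prime_of_lucas_of_prod_eq 2 (l := [2, 3, 3, 127, 433, 907])
    (by norm_num) (by norm_num) (by reduce_mod_char) ?_
  simp only [List.forall_mem_cons]
  reduce_mod_char
  decide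

theorem prime_897849649 : Nat.Prime 897849649 := by
  refine prime_of_lucas_of_prod_eq 26 (l := [2, 2, 2, 2, 3, 3, 47, 132661])
    (by norm_num) (by norm_num) (by reduce_mod_char) ?_
  simp only [List.forall_mem_cons]
  reduce_mod_char
  decide

theorem one_sub_div_le_log_sub_log {x y : ℝ} (hx : 0 < x) (hy : 0 < y) :
    1 - x / y ≤ Real.log y - Real.log x := by
  rw [← Real.log_div hy.ne' hx.ne', ← inv_div]
  exact Real.one_sub_inv_le_log_of_pos (div_pos hy hx)

theorem pow_succ_lt_pow_of_log_lt {x y : ℝ} {n : ℕ} (hx : 0 < x) (hy : 0 < y)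
    (h : Real.log x < n * (1 - x / y)) : x ^ (n + 1) < y ^ n := by
  rw [← Real.log_lt_log_iff (pow_pos hx _) (pow_pos hy _), Real.log_pow, Real.log_pow]
  calc ((n + 1 : ℕ) : ℝ) * Real.log x
      = n * Real.log x + Real.log x := by push_cast; ring
    _ < n * Real.log x + n * (1 - x / y) := by gcongr
    _ ≤ n * Real.log x + n * (Real.log y - Real.log x) := by
      gcongr _ + _ * ?_
      exact one_sub_div_le_log_sub_log hx hy
    _ = n * Real.log y := by ring

theorem rpow_one_div_lt_rpow_one_div_iff {x y : ℝ} {m n : ℕ} (hx : 0 ≤ x) (hy : 0 ≤ y)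
    (hm : m ≠ 0) (hn : n ≠ 0) :
    x ^ (1 / (m : ℝ)) < y ^ (1 / (n : ℝ)) ↔ x ^ n < y ^ m := by
  have hx_root : x ^ (1 / (m : ℝ)) = (x ^ n) ^ (1 / (m * n : ℝ)) := by
    rw [← Real.rpow_natCast_mul hx]
    field_simp
  have hy_root : y ^ (1 / (n : ℝ)) = (y ^ m) ^ (1 / (m * n : ℝ)) := by
    rw [← Real.rpow_natCast_mul hy]
    field_simp
  rw [hx_root, hy_root, Real.rpow_lt_rpow_iff (by positivity) (by positivity) (by positivity)]

theorem log_897783067_lt : Real.log 897783067 < 30 * Real.log 2 :=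
  calc Real.log 897783067 < Real.log (2 ^ 30) := Real.log_lt_log (by norm_num) (by norm_num)
    _ = 30 * Real.log 2 := mod_cast Real.log_pow 2 30

/-- The numbers 897783067 and 897849649 are both prime, both congruent to 127 mod 486,
and `897783067^(1/282866) < 897849649^(1/282867)`
(equivalently, `897783067^282867 < 897849649^282866`). -/
theorem sun_firoozbakht_counterexample :
    Nat.Prime 897783067 ∧ Nat.Prime 897849649 ∧
    897783067 % 486 = 127 ∧ 897849649 % 486 = 127 ∧
    (897783067 : ℝ) ^ ((1 : ℝ) / 282866) < (897849649 : ℝ) ^ ((1 : ℝ) / 282867) ∧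
    (897783067 : ℕ) ^ 282867 < (897849649 : ℕ) ^ 282866 := by
  have hlog : Real.log 897783067 < (282866 : ℕ) * (1 - 897783067 / 897849649 : ℝ) :=
    calc Real.log 897783067 < 30 * Real.log 2 := log_897783067_lt
      _ < 30 * 0.6931471808 := by gcongr; exact Real.log_two_lt_d9
      _ < (282866 : ℕ) * (1 - 897783067 / 897849649 : ℝ) := by norm_num
  have hpow : (897783067 : ℝ) ^ 282867 < 897849649 ^ 282866 :=
    pow_succ_lt_pow_of_log_lt (by norm_num) (by norm_num) hlog
  refine ⟨prime_897783067, prime_897849649, by norm_num, by norm_num, ?_, mod_cast hpow⟩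
  exact_mod_cast (rpow_one_div_lt_rpow_one_div_iff (m := 282866) (n := 282867)
    (by norm_num) (by norm_num) (by norm_num) (by norm_num)).2 hpow
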